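/- Applicative bisimilarity is complete with respect to evaluation-context-based contextual equivalence in λ_S: if t0 ≡E t1 then t0 ≈ t1. -/

import Mathlib

namespace LamS

/-- Terms of the λ-calculus with shift and reset, in de Bruijn representation.
    `lam` and `shift` bind variable 0. -/
inductive Tm : Type
  | var : ℕ → Tm
  | lam : Tm → Tm
  | app : Tm → Tm → Tm
  | shift : Tm → Tm
  | reset : Tm → Tm
  deriving DecidableEq

open Tm

/-- Lift (shift up) free de Bruijn indices `≥ c` by `d`. -/
def liftT (d : ℕ) : ℕ → Tm → Tm
  | c, var n => if n < c then var n else var (n + d)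
  | c, lam t => lam (liftT d (c+1) t)
  | c, app a b => app (liftT d c a) (liftT d c b)
  | c, shift t => shift (liftT d (c+1) t)
  | c, reset t => reset (liftT d c t)

/-- Capture-avoiding substitution `t[j := s]` (de Bruijn). -/
def substT : ℕ → Tm → Tm → Tm
  | j, s, var n => if n = j then liftT j 0 s else if j < n then var (n-1) else var n
  | j, s, lam t => lam (substT (j+1) s t)
  | j, s, app a b => app (substT j s a) (substT j s b)
  | j, s, shift t => shift (substT (j+1) s t)
  | j, s, reset t => reset (substT j s t)

/-- Values are λ-abstractions. -/
def IsValue (t : Tm) : Prop := ∃ b, t = lam b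

/-- All free variables are `< n`. -/
def ClosedUnder : ℕ → Tm → Prop
  | n, var m => m < n
  | n, lam t => ClosedUnder (n+1) t
  | n, app a b => ClosedUnder n a ∧ ClosedUnder n b
  | n, shift t => ClosedUnder (n+1) t
  | n, reset t => ClosedUnder n t

def Closed (t : Tm) : Prop := ClosedUnder 0 t

/-- Pure evaluation contexts, interpreted inside-out:
    `appV b E` is `E[(λ.b) []]` and `appL E t` is `E[[] t]`. -/
inductive PCtx : Type
  | hole : PCtx
  | appV : Tm → PCtx → PCtx
  | appL : PCtx → Tm → PCtx
  deriving DecidableEq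

def PCtx.plug : PCtx → Tm → Tm
  | .hole, t => t
  | .appV b E, t => E.plug (app (lam b) t)
  | .appL E s, t => E.plug (app t s)

def PCtx.liftC (d : ℕ) : ℕ → PCtx → PCtx
  | _, .hole => .hole
  | c, .appV b E => .appV (liftT d (c+1) b) (PCtx.liftC d c E)
  | c, .appL E s => .appL (PCtx.liftC d c E) (liftT d c s)

/-- Composition of pure contexts: `(E.comp E').plug t = E.plug (E'.plug t)`. -/
def PCtx.comp : PCtx → PCtx → PCtx
  | E, .hole => E
  | E, .appV b E' => .appV b (E.comp E')
  | E, .appL E' s => .appL (E.comp E') s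

/-- The captured delimited continuation `λx.⟨E[x]⟩`. -/
def contOf (E : PCtx) : Tm := lam (reset ((PCtx.liftC 1 0 E).plug (var 0)))

/-- Call-by-value evaluation contexts, interpreted inside-out. -/
inductive ECtx : Type
  | hole : ECtx
  | appV : Tm → ECtx → ECtx
  | appL : ECtx → Tm → ECtx
  | resetC : ECtx → ECtx
  deriving DecidableEq

def ECtx.plug : ECtx → Tm → Tm
  | .hole, t => t
  | .appV b F, t => F.plug (app (lam b) t)
  | .appL F s, t => F.plug (app t s)
  | .resetC F, t => F.plug (reset t)

def ClosedECtx : ECtx → Prop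
  | .hole => True
  | .appV b F => ClosedUnder 1 b ∧ ClosedECtx F
  | .appL F s => ClosedECtx F ∧ Closed s
  | .resetC F => ClosedECtx F

/-- One-step reduction of λ_S. -/
inductive Red : Tm → Tm → Prop
  | beta (F : ECtx) (t v : Tm) (hv : IsValue v) :
      Red (F.plug (app (lam t) v)) (F.plug (substT 0 v t))
  | cap (F : ECtx) (E : PCtx) (t : Tm) :
      Red (F.plug (reset (E.plug (shift t)))) (F.plug (reset (substT 0 (contOf E) t)))
  | res (F : ECtx) (v : Tm) (hv : IsValue v) :
      Red (F.plug (reset v)) (F.plug v)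

def RedStar : Tm → Tm → Prop := Relation.ReflTransGen Red

/-- A term is stuck if it is not a value and cannot reduce. -/
def Stuck (t : Tm) : Prop := ¬ IsValue t ∧ ∀ u, ¬ Red t u

/-- Evaluation: reduce to an irreducible term. -/
def Eval (t t' : Tm) : Prop := RedStar t t' ∧ ∀ u, ¬ Red t' u

def IsRedex (r : Tm) : Prop :=
  (∃ t v, IsValue v ∧ r = app (lam t) v) ∨
  (∃ E s, r = reset (PCtx.plug E (shift s))) ∨
  (∃ v, IsValue v ∧ r = reset v)

/-- Labels of the LTS. -/
inductive Label : Type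
  | tau : Label
  | val : Tm → Label
  | ctx : PCtx → Label

/-- The labelled transition system for λ_S. -/
inductive Step : Tm → Label → Tm → Prop
  | beta {t v : Tm} (hv : IsValue v) :
      Step (app (lam t) v) .tau (substT 0 v t)
  | resetVal {v : Tm} (hv : IsValue v) :
      Step (reset v) .tau v
  | appL {t0 t0' t1 : Tm} :
      Step t0 .tau t0' → Step (app t0 t1) .tau (app t0' t1)
  | appR {v t t' : Tm} (hv : IsValue v) :
      Step t .tau t' → Step (app v t) .tau (app v t')
  | resetT {t t' : Tm} :
      Step t .tau t' → Step (reset t) .tau (reset t')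
  | resetCap {t t' : Tm} :
      Step t (.ctx .hole) t' → Step (reset t) .tau t'
  | lamApp {t v : Tm} (hv : IsValue v) :
      Step (lam t) (.val v) (substT 0 v t)
  | shiftCap {t : Tm} (E : PCtx) :
      Step (shift t) (.ctx E) (reset (substT 0 (contOf E) t))
  | capL {t0 t0' t1 : Tm} {E : PCtx} :
      Step t0 (.ctx (.appL E t1)) t0' → Step (app t0 t1) (.ctx E) t0'
  | capR {b t t' : Tm} {E : PCtx} :
      Step t (.ctx (.appV b E)) t' → Step (app (lam b) t) (.ctx E) t'

def TauStar : Tm → Tm → Prop := Relation.ReflTransGen (fun a b => Step a .tau b)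

/-- Weak delay transition: τ-steps, then an `l`-step if `l ≠ τ`. -/
def Weak (t : Tm) (l : Label) (t' : Tm) : Prop :=
  match l with
  | .tau => TauStar t t'
  | _ => ∃ u, TauStar t u ∧ Step u l t'

/-- Applicative simulation. -/
def IsSim (R : Tm → Tm → Prop) : Prop :=
  ∀ ⦃t0 t1⦄, R t0 t1 → ∀ ⦃l t0'⦄, Step t0 l t0' →
    ∃ t1', Weak t1 l t1' ∧ R t0' t1'

def IsBisim (R : Tm → Tm → Prop) : Prop := IsSim R ∧ IsSim (flip R)

/-- Applicative bisimilarity: the largest applicative bisimulation. -/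
def Bisim (t0 t1 : Tm) : Prop := ∃ R, IsBisim R ∧ R t0 t1

/-- Big-step applicative simulation. -/
def IsBigSim (R : Tm → Tm → Prop) : Prop :=
  ∀ ⦃t0 t1⦄, R t0 t1 → ∀ ⦃l t0'⦄, l ≠ Label.tau → Weak t0 l t0' →
    ∃ t1', Weak t1 l t1' ∧ R t0' t1'

def IsBigBisim (R : Tm → Tm → Prop) : Prop := IsBigSim R ∧ IsBigSim (flip R)

/-- Big-step applicative bisimilarity. -/
def BigBisim (t0 t1 : Tm) : Prop := ∃ R, IsBigBisim R ∧ R t0 t1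

/-- General contexts. -/
inductive Ctx : Type
  | hole : Ctx
  | lam : Ctx → Ctx
  | appL : Ctx → Tm → Ctx
  | appR : Tm → Ctx → Ctx
  | shift : Ctx → Ctx
  | reset : Ctx → Ctx

/-- Plugging a term in a general context (free variables may be captured). -/
def Ctx.plug : Ctx → Tm → Tm
  | .hole, t => t
  | .lam C, t => Tm.lam (C.plug t)
  | .appL C s, t => Tm.app (C.plug t) s
  | .appR s C, t => Tm.app s (C.plug t)
  | .shift C, t => Tm.shift (C.plug t)
  | .reset C, t => Tm.reset (C.plug t)

def CtxClosedUnder : ℕ → Ctx → Prop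
  | _, .hole => True
  | n, .lam C => CtxClosedUnder (n+1) C
  | n, .appL C s => CtxClosedUnder n C ∧ ClosedUnder n s
  | n, .appR s C => ClosedUnder n s ∧ CtxClosedUnder n C
  | n, .shift C => CtxClosedUnder (n+1) C
  | n, .reset C => CtxClosedUnder n C

def ClosedCtx (C : Ctx) : Prop := CtxClosedUnder 0 C

def EvalsToValue (t : Tm) : Prop := ∃ v, IsValue v ∧ Eval t v

def EvalsToStuck (t : Tm) : Prop := ∃ s, Stuck s ∧ Eval t s

/-- Contextual equivalence on closed terms. -/
def CtxEquiv (t0 t1 : Tm) : Prop :=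
  ∀ C : Ctx, ClosedCtx C →
    (EvalsToValue (C.plug t0) ↔ EvalsToValue (C.plug t1)) ∧
    (EvalsToStuck (C.plug t0) ↔ EvalsToStuck (C.plug t1))

/-- Contextual equivalence restricted to evaluation contexts. -/
def ECtxEquiv (t0 t1 : Tm) : Prop :=
  ∀ F : ECtx, ClosedECtx F →
    (EvalsToValue (F.plug t0) ↔ EvalsToValue (F.plug t1)) ∧
    (EvalsToStuck (F.plug t0) ↔ EvalsToStuck (F.plug t1))

/-- Lifting a substitution under a binder. -/
def liftSub (σ : ℕ → Tm) : ℕ → Tm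
  | 0 => var 0
  | n+1 => liftT 1 0 (σ n)

/-- Apply a substitution to all free variables of a term. -/
def applySub (σ : ℕ → Tm) : Tm → Tm
  | var n => σ n
  | lam t => lam (applySub (liftSub σ) t)
  | app a b => app (applySub σ a) (applySub σ b)
  | shift t => shift (applySub (liftSub σ) t)
  | reset t => reset (applySub σ t)

/-- A closing substitution maps every variable to a closed value. -/
def ClosingSub (σ : ℕ → Tm) : Prop := ∀ n, IsValue (σ n) ∧ Closed (σ n)

/-- Open extension of a relation on closed terms. -/
def OpenExt (R : Tm → Tm → Prop) (t0 t1 : Tm) : Prop :=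
  ∀ σ, ClosingSub σ → R (applySub σ t0) (applySub σ t1)

/-- Howe's closure of applicative bisimilarity (compatible refinement rules inlined). -/
inductive Howe : Tm → Tm → Prop
  | base {t0 t1} : OpenExt Bisim t0 t1 → Howe t0 t1
  | right {t0 t2 t1} : Howe t0 t2 → OpenExt Bisim t2 t1 → Howe t0 t1
  | compVar (n : ℕ) : Howe (var n) (var n)
  | compLam {t0 t1} : Howe t0 t1 → Howe (lam t0) (lam t1)
  | compApp {a0 a1 b0 b1} : Howe a0 a1 → Howe b0 b1 → Howe (app a0 b0) (app a1 b1)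
  | compShift {t0 t1} : Howe t0 t1 → Howe (shift t0) (shift t1)
  | compReset {t0 t1} : Howe t0 t1 → Howe (reset t0) (reset t1)

/-- Howe's closure restricted to closed terms. -/
def HoweC (t0 t1 : Tm) : Prop := Closed t0 ∧ Closed t1 ∧ Howe t0 t1

/-- Extension of Howe's closure to pure contexts. -/
inductive PCtxHowe : PCtx → PCtx → Prop
  | hole : PCtxHowe .hole .hole
  | appV {b0 b1 E0 E1} : Howe b0 b1 → PCtxHowe E0 E1 → PCtxHowe (.appV b0 E0) (.appV b1 E1)
  | appL {E0 E1 t0 t1} : PCtxHowe E0 E1 → Howe t0 t1 → PCtxHowe (.appL E0 t0) (.appL E1 t1)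

/-- Extension of Howe's closure to labels. -/
def LabHowe : Label → Label → Prop
  | .tau, .tau => True
  | .val v0, .val v1 => Closed v0 ∧ Closed v1 ∧ Howe v0 v1
  | .ctx E0, .ctx E1 => PCtxHowe E0 E1
  | _, _ => False

/-- ω = λx. x x -/
def omegaTm : Tm := lam (app (var 0) (var 0))

/-- Ω = ω ω, the standard diverging term. -/
def OmegaTm : Tm := app omegaTm omegaTm

/-- Every τ-reachable term can do a τ-step: only infinite τ-sequences. -/
def Diverges (t : Tm) : Prop := ∀ u, TauStar t u → ∃ u', Step u .tau u'

/-- No weak non-τ transition. -/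
def NoObs (t : Tm) : Prop := ∀ l t', l ≠ Label.tau → ¬ Weak t l t'

end LamS

namespace LamS
open Tm

/-- Replace all free variables of index at least `k` by the diverging closed term. -/
def clo : ℕ → Tm → Tm
  | k, var n => if n < k then var n else OmegaTm
  | k, lam t => lam (clo (k+1) t)
  | k, app a b => app (clo k a) (clo k b)
  | k, shift t => shift (clo (k+1) t)
  | k, reset t => reset (clo k t)

def cloC : ℕ → PCtx → PCtx
  | _, .hole => .hole
  | k, .appV b E => .appV (clo (k+1) b) (cloC k E)
  | k, .appL E s => .appL (cloC k E) (clo k s)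

def cloL : Label → Label
  | .tau => .tau
  | .val v => .val (clo 0 v)
  | .ctx E => .ctx (cloC 0 E)

theorem closed_clo (t : Tm) : ∀ k, ClosedUnder k (clo k t) := by
  induction t with
  | var n =>
    intro k
    simp only [clo]
    split
    · simpa [ClosedUnder]
    · simp [OmegaTm, omegaTm, ClosedUnder]
  | lam t ih => intro k; exact ih _
  | app a b iha ihb => intro k; exact ⟨iha _, ihb _⟩
  | shift t ih => intro k; exact ih _
  | reset t ih => intro k; exact ih _

theorem clo_of_closed (t : Tm) : ∀ k, ClosedUnder k t → clo k t = t := by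
  induction t with
  | var n => intro k h; simp only [ClosedUnder] at h; simp [clo, h]
  | lam t ih => intro k h; simp only [clo, ih _ h]
  | app a b iha ihb => intro k h; simp only [clo, iha _ h.1, ihb _ h.2]
  | shift t ih => intro k h; simp only [clo, ih _ h]
  | reset t ih => intro k h; simp only [clo]; rw [ih _ h]

theorem lift_Omega (d c : ℕ) : liftT d c OmegaTm = OmegaTm := by
  simp [OmegaTm, omegaTm, liftT]

theorem subst_Omega (j : ℕ) (s : Tm) : substT j s OmegaTm = OmegaTm := by
  simp [OmegaTm, omegaTm, substT]

theorem clo_lift (d : ℕ) (t : Tm) :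
    ∀ c k, c ≤ k → clo (k+d) (liftT d c t) = liftT d c (clo k t) := by
  induction t with
  | var n =>
    intro c k h
    by_cases h1 : n < c
    · have h2 : n < k := by omega
      have h3 : n < k + d := by omega
      simp [liftT, clo, h1, h2, h3]
    · by_cases h2 : n < k
      · simp [liftT, clo, h1, h2]
      · simp [liftT, clo, h1, h2, lift_Omega]
  | lam t ih =>
    intro c k h
    simp only [liftT, clo]
    rw [← ih (c+1) (k+1) (by omega), Nat.add_right_comm]
  | app a b iha ihb => intro c k h; simp only [liftT, clo, iha c k h, ihb c k h]
  | shift t ih =>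
    intro c k h
    simp only [liftT, clo]
    rw [← ih (c+1) (k+1) (by omega), Nat.add_right_comm]
  | reset t ih => intro c k h; simp only [liftT, clo, ih c k h]

theorem clo_subst (m : ℕ) (s t : Tm) :
    ∀ j, clo (j+m) (substT j s t) = substT j (clo m s) (clo (j+m+1) t) := by
  induction t with
  | var n =>
    intro j
    rcases lt_trichotomy n j with h | h | h
    · have h1 : n ≠ j := by omega
      have h2 : ¬ j < n := by omega
      have h3 : n < j + m := by omega
      have h4 : n < j + m + 1 := by omega
      simp [substT, clo, h1, h2, h3, h4]
    · subst h
      have h4 : n < n + m + 1 := by omega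
      have := clo_lift n s 0 m (by omega)
      rw [Nat.add_comm] at this
      simp [substT, clo, h4, this]
    · have h1 : n ≠ j := by omega
      by_cases h3 : n < j + m + 1
      · have h4 : n - 1 < j + m := by omega
        simp [substT, clo, h1, h, h3, h4]
      · have h4 : ¬ n - 1 < j + m := by omega
        simp only [substT, clo, h1, h, h3, h4, if_false, if_true, subst_Omega]
  | lam t ih =>
    intro j
    simp only [substT, clo]
    have := ih (j+1)
    rw [show j + 1 + m = j + m + 1 by omega] at this
    rw [this]
  | app a b iha ihb => intro j; simp only [substT, clo, iha, ihb]
  | shift t ih =>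
    intro j
    simp only [substT, clo]
    have := ih (j+1)
    rw [show j + 1 + m = j + m + 1 by omega] at this
    rw [this]
  | reset t ih => intro j; simp only [substT, clo, ih]

theorem clo_subst0 (s t : Tm) : clo 0 (substT 0 s t) = substT 0 (clo 0 s) (clo 1 t) := by
  simpa using clo_subst 0 s t 0

theorem clo_plug (k : ℕ) (E : PCtx) : ∀ t, clo k (E.plug t) = (cloC k E).plug (clo k t) := by
  induction E with
  | hole => intro t; rfl
  | appV b E ih => intro t; simp only [PCtx.plug, cloC, ih, clo]
  | appL E s ih => intro t; simp only [PCtx.plug, cloC, ih, clo]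

theorem cloC_lift (E : PCtx) : cloC 1 (PCtx.liftC 1 0 E) = PCtx.liftC 1 0 (cloC 0 E) := by
  induction E with
  | hole => rfl
  | appV b E ih =>
    simp only [PCtx.liftC, cloC, ih]
    rw [← clo_lift 1 b 1 1 (by omega)]
  | appL E s ih =>
    simp only [PCtx.liftC, cloC, ih]
    rw [← clo_lift 1 s 0 0 (by omega)]

theorem clo_contOf (E : PCtx) : clo 0 (contOf E) = contOf (cloC 0 E) := by
  simp [contOf, clo, clo_plug, cloC_lift]

theorem clo_value {v : Tm} (hv : IsValue v) (k : ℕ) : IsValue (clo k v) := by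
  obtain ⟨b, rfl⟩ := hv
  exact ⟨_, rfl⟩

theorem step_clo {t t' : Tm} {l : Label} (h : Step t l t') :
    Step (clo 0 t) (cloL l) (clo 0 t') := by
  induction h with
  | beta hv => rw [clo_subst0]; exact Step.beta (clo_value hv 0)
  | resetVal hv => exact Step.resetVal (clo_value hv 0)
  | appL _ ih => exact Step.appL ih
  | appR hv _ ih => exact Step.appR (clo_value hv 0) ih
  | resetT _ ih => exact Step.resetT ih
  | resetCap _ ih => exact Step.resetCap ih
  | lamApp hv => rw [clo_subst0]; exact Step.lamApp (clo_value hv 0)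
  | shiftCap E =>
    simp only [clo]
    rw [clo_subst0, clo_contOf]; exact Step.shiftCap _
  | capL _ ih => exact Step.capL ih
  | capR _ ih => exact Step.capR ih

/-- The kind of a label. -/
def Label.kind : Label → ℕ
  | .tau => 0
  | .val _ => 1
  | .ctx _ => 2

theorem step_det {t u : Tm} {l : Label} (h : Step t l u) :
    ∀ {l' u'}, Step t l' u' → l.kind = l'.kind ∧ (l = l' → u = u') := by
  induction h with
  | beta hv =>
    obtain ⟨b, rfl⟩ := hv
    intro l' u' h'
    cases h' with
    | beta => simp
    | appL h => cases h
    | appR _ h => cases h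
    | capL h => cases h
    | capR h => cases h
  | resetVal hv =>
    obtain ⟨b, rfl⟩ := hv
    intro l' u' h'
    cases h' with
    | resetVal => simp
    | resetT h => cases h
    | resetCap h => cases h
  | appL h0 ih =>
    intro l' u' h'
    cases h' with
    | beta => cases h0
    | appL h => simp [(ih h).2 rfl]
    | appR hv h => obtain ⟨b, rfl⟩ := hv; cases h0
    | capL h => have := (ih h).1; simp [Label.kind] at this
    | capR h => cases h0
  | appR hv h0 ih =>
    obtain ⟨b, rfl⟩ := hv
    intro l' u' h'
    cases h' with
    | beta hv => obtain ⟨b, rfl⟩ := hv; cases h0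
    | appL h => cases h
    | appR hv h => simp [(ih h).2 rfl]
    | capL h => cases h
    | capR h => have := (ih h).1; simp [Label.kind] at this
  | resetT h0 ih =>
    intro l' u' h'
    cases h' with
    | resetVal hv => obtain ⟨b, rfl⟩ := hv; cases h0
    | resetT h => simp [(ih h).2 rfl]
    | resetCap h => have := (ih h).1; simp [Label.kind] at this
  | resetCap h0 ih =>
    intro l' u' h'
    cases h' with
    | resetVal hv => obtain ⟨b, rfl⟩ := hv; cases h0
    | resetT h => have := (ih h).1; simp [Label.kind] at this
    | resetCap h => simp [(ih h).2 rfl]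
  | lamApp hv =>
    intro l' u' h'
    cases h' with
    | lamApp => constructor
                · rfl
                · intro h; injection h with h; rw [h]
  | shiftCap E =>
    intro l' u' h'
    cases h' with
    | shiftCap => constructor
                  · rfl
                  · intro h; injection h with h; rw [h]
  | capL h0 ih =>
    intro l' u' h'
    cases h' with
    | beta => cases h0
    | appL h => have := (ih h).1; simp [Label.kind] at this
    | appR hv h => obtain ⟨b, rfl⟩ := hv; cases h0
    | capL h =>
      refine ⟨rfl, fun e => (ih h).2 ?_⟩
      injection e with e; rw [e]
    | capR h => cases h0
  | capR h0 ih =>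
    intro l' u' h'
    cases h' with
    | beta hv => obtain ⟨b, rfl⟩ := hv; cases h0
    | appL h => cases h
    | appR hv h => have := (ih h).1; simp [Label.kind] at this
    | capL h => cases h
    | capR h =>
      refine ⟨rfl, fun e => (ih h).2 ?_⟩
      injection e with e; rw [e]

theorem comp_assoc (A B C : PCtx) : A.comp (B.comp C) = (A.comp B).comp C := by
  induction C with
  | hole => rfl
  | appV b E ih => simp [PCtx.comp, ih]
  | appL E s ih => simp [PCtx.comp, ih]

theorem hole_comp (A : PCtx) : PCtx.hole.comp A = A := by
  induction A with
  | hole => rfl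
  | appV b E ih => simp [PCtx.comp, ih]
  | appL E s ih => simp [PCtx.comp, ih]

theorem comp_plug (A B : PCtx) : ∀ t, (A.comp B).plug t = A.plug (B.plug t) := by
  induction B with
  | hole => intro t; rfl
  | appV b E ih => intro t; simp [PCtx.comp, PCtx.plug, ih]
  | appL E s ih => intro t; simp [PCtx.comp, PCtx.plug, ih]

theorem step_plug_ctx (E E' : PCtx) : ∀ {t t'}, Step t (.ctx (E.comp E')) t' →
    Step (E'.plug t) (.ctx E) t' := by
  induction E' with
  | hole => intro t t' h; exact h
  | appV b E1 ih => intro t t' h; exact ih (Step.capR h)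
  | appL E1 s ih => intro t t' h; exact ih (Step.capL h)

theorem step_reset_plug {E : PCtx} {t t' : Tm} (h : Step t (.ctx E) t') :
    Step (reset (E.plug t)) .tau t' := by
  apply Step.resetCap
  apply step_plug_ctx
  rwa [hole_comp]

theorem step_ctx_inv {t t' : Tm} {l : Label} (h : Step t l t') : ∀ E, l = .ctx E →
    ∃ E' s, t = PCtx.plug E' (shift s) ∧ t' = reset (substT 0 (contOf (E.comp E')) s) := by
  induction h with
  | shiftCap E0 =>
    intro E e
    injection e with e
    subst e
    exact ⟨.hole, _, rfl, rfl⟩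
  | @capL t0 t0' t1 E0 h0 ih =>
    intro E e
    injection e with e
    subst e
    obtain ⟨E', s, rfl, rfl⟩ := ih _ rfl
    refine ⟨(PCtx.appL .hole t1).comp E', s, ?_, ?_⟩
    · rw [comp_plug]; rfl
    · rw [comp_assoc]; rfl
  | @capR b t t' E0 h0 ih =>
    intro E e
    injection e with e
    subst e
    obtain ⟨E', s, rfl, rfl⟩ := ih _ rfl
    refine ⟨(PCtx.appV b .hole).comp E', s, ?_, ?_⟩
    · rw [comp_plug]; rfl
    · rw [comp_assoc]; rfl
  | _ => intro E e; cases e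

theorem step_plug (F : ECtx) : ∀ {t t'}, Step t .tau t' → Step (F.plug t) .tau (F.plug t') := by
  induction F with
  | hole => intro t t' h; exact h
  | appV b F ih => intro t t' h; exact ih (Step.appR ⟨_, rfl⟩ h)
  | appL F s ih => intro t t' h; exact ih (Step.appL h)
  | resetC F ih => intro t t' h; exact ih (Step.resetT h)

def ECtx.comp' : ECtx → ECtx → ECtx
  | G, .hole => G
  | G, .appV b F => .appV b (ECtx.comp' G F)
  | G, .appL F s => .appL (ECtx.comp' G F) s
  | G, .resetC F => .resetC (ECtx.comp' G F)

theorem ecomp_plug (G F : ECtx) : ∀ t, (G.comp' F).plug t = G.plug (F.plug t) := by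
  induction F with
  | hole => intro t; rfl
  | appV b F ih => intro t; simp [ECtx.comp', ECtx.plug, ih]
  | appL F s ih => intro t; simp [ECtx.comp', ECtx.plug, ih]
  | resetC F ih => intro t; simp [ECtx.comp', ECtx.plug, ih]

theorem red_plug (G : ECtx) {t t' : Tm} (h : Red t t') : Red (G.plug t) (G.plug t') := by
  cases h with
  | beta F t v hv => rw [← ecomp_plug, ← ecomp_plug]; exact Red.beta _ _ _ hv
  | cap F E t => rw [← ecomp_plug, ← ecomp_plug]; exact Red.cap _ _ _
  | res F _ hv => rw [← ecomp_plug, ← ecomp_plug]; exact Red.res _ _ hv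

theorem step_to_red {t t' : Tm} {l : Label} (h : Step t l t') : l = .tau → Red t t' := by
  induction h with
  | beta hv => intro _; exact Red.beta .hole _ _ hv
  | resetVal hv => intro _; exact Red.res .hole _ hv
  | @appL t0 t0' t1 _ ih => intro _; exact red_plug (.appL .hole t1) (ih rfl)
  | appR hv _ ih => intro _; obtain ⟨b, rfl⟩ := hv; exact red_plug (.appV b .hole) (ih rfl)
  | resetT _ ih => intro _; exact red_plug (.resetC .hole) (ih rfl)
  | resetCap h _ =>
    intro _
    obtain ⟨E', s, rfl, rfl⟩ := step_ctx_inv h _ rfl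
    rw [hole_comp]
    exact Red.cap .hole _ _
  | _ => intro e; cases e

theorem red_iff {t t' : Tm} : Red t t' ↔ Step t .tau t' := by
  constructor
  · intro h
    cases h with
    | beta F t v hv => exact step_plug F (Step.beta hv)
    | cap F E t => exact step_plug F (step_reset_plug (Step.shiftCap E))
    | res F _ hv => exact step_plug F (Step.resetVal hv)
  · intro h; exact step_to_red h rfl

theorem red_det {t u u' : Tm} (h : Red t u) (h' : Red t u') : u = u' :=
  (step_det (red_iff.1 h) (red_iff.1 h')).2 rfl

theorem eval_red {t t' s : Tm} (h : Red t t') : Eval t s ↔ Eval t' s := by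
  constructor
  · rintro ⟨h1, h2⟩
    refine ⟨?_, h2⟩
    rcases Relation.ReflTransGen.cases_head h1 with rfl | ⟨c, hc, hcs⟩
    · exact absurd h (h2 _)
    · rw [red_det h hc]; exact hcs
  · rintro ⟨h1, h2⟩
    exact ⟨Relation.ReflTransGen.head h h1, h2⟩

theorem equiv_step {t t' : Tm} (h : Step t .tau t') : ECtxEquiv t t' := by
  intro F _
  have hr := red_plug F (red_iff.2 h)
  simp only [EvalsToValue, EvalsToStuck, eval_red hr, and_self]

theorem ECtxEquiv.symm' {a b : Tm} (h : ECtxEquiv a b) : ECtxEquiv b a :=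
  fun F hF => ⟨(h F hF).1.symm, (h F hF).2.symm⟩

theorem ECtxEquiv.trans' {a b c : Tm} (h : ECtxEquiv a b) (h' : ECtxEquiv b c) : ECtxEquiv a c :=
  fun F hF => ⟨(h F hF).1.trans (h' F hF).1, (h F hF).2.trans (h' F hF).2⟩

theorem equiv_app {a b s : Tm} (hs : Closed s) (h : ECtxEquiv a b) :
    ECtxEquiv (app a s) (app b s) := fun F hF => h (.appL F s) ⟨hF, hs⟩

theorem equiv_appR {a b s : Tm} (hs : ClosedUnder 1 s) (h : ECtxEquiv a b) :
    ECtxEquiv (app (lam s) a) (app (lam s) b) := fun F hF => h (.appV s F) ⟨hs, hF⟩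

theorem equiv_reset {a b : Tm} (h : ECtxEquiv a b) :
    ECtxEquiv (reset a) (reset b) := fun F hF => h (.resetC F) hF

theorem equiv_plug (E : PCtx) : ∀ {a b : Tm}, ECtxEquiv a b →
    ECtxEquiv ((cloC 0 E).plug a) ((cloC 0 E).plug b) := by
  induction E with
  | hole => intro a b h; exact h
  | appV s E ih => intro a b h; exact ih (equiv_appR (closed_clo _ _) h)
  | appL E s ih => intro a b h; exact ih (equiv_app (closed_clo _ _) h)

theorem equiv_taustar {t t' : Tm} (h : TauStar t t') : ECtxEquiv (clo 0 t) (clo 0 t') := by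
  induction h with
  | refl => intro F _; simp
  | tail _ h ih => exact ih.trans' (equiv_step (step_clo h))

theorem progress (t : Tm) : IsValue t ∨ (∃ t', Step t .tau t') ∨
    (∀ E, ∃ t', Step t (.ctx E) t') ∨ Step (clo 0 t) .tau (clo 0 t) := by
  induction t with
  | var n =>
    right; right; right
    exact Step.beta (t := app (var 0) (var 0)) (v := omegaTm) ⟨_, rfl⟩
  | lam t _ => exact Or.inl ⟨_, rfl⟩
  | app a b iha ihb =>
    right
    rcases iha with ⟨c, rfl⟩ | ⟨t', h⟩ | h | h
    · rcases ihb with hv | ⟨t', h⟩ | h | h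
      · exact Or.inl ⟨_, Step.beta hv⟩
      · exact Or.inl ⟨_, Step.appR ⟨_, rfl⟩ h⟩
      · refine Or.inr (Or.inl fun E => ?_)
        obtain ⟨t', h⟩ := h (.appV c E)
        exact ⟨t', Step.capR h⟩
      · exact Or.inr (Or.inr (Step.appR ⟨_, rfl⟩ h))
    · exact Or.inl ⟨_, Step.appL h⟩
    · refine Or.inr (Or.inl fun E => ?_)
      obtain ⟨t', h⟩ := h (.appL E b)
      exact ⟨t', Step.capL h⟩
    · exact Or.inr (Or.inr (Step.appL h))
  | shift t _ => exact Or.inr (Or.inr (Or.inl fun E => ⟨_, Step.shiftCap E⟩))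
  | reset t ih =>
    right
    rcases ih with hv | ⟨t', h⟩ | h | h
    · exact Or.inl ⟨_, Step.resetVal hv⟩
    · exact Or.inl ⟨_, Step.resetT h⟩
    · obtain ⟨t', h⟩ := h .hole
      exact Or.inl ⟨_, Step.resetCap h⟩
    · exact Or.inr (Or.inr (Step.resetT h))

theorem reflect {x u : Tm} (h : RedStar x u) (hu : ∀ w, ¬ Red u w) :
    ∀ t, clo 0 t = x → ∃ t', TauStar t t' ∧ clo 0 t' = u := by
  induction h using Relation.ReflTransGen.head_induction_on with
  | refl => intro t ht; exact ⟨t, Relation.ReflTransGen.refl, ht⟩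
  | head hxy _ ih =>
    intro t ht
    subst ht
    have hs := red_iff.1 hxy
    rcases progress t with ⟨b, rfl⟩ | ⟨t', h⟩ | h | h
    · cases hs
    · obtain ⟨t'', h1, h2⟩ := ih t' ((step_det (step_clo h) hs).2 rfl)
      exact ⟨t'', Relation.ReflTransGen.head h h1, h2⟩
    · obtain ⟨t', h⟩ := h .hole
      have := (step_det (step_clo h) hs).1
      simp [cloL, Label.kind] at this
    · exact ih t ((step_det h hs).2 rfl)

theorem sim_aux : IsSim (fun t0 t1 => ECtxEquiv (clo 0 t0) (clo 0 t1)) := by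
  intro t0 t1 hR l t0' hstep
  have hc := step_clo hstep
  cases l with
  | tau =>
    exact ⟨t1, Relation.ReflTransGen.refl, (equiv_step hc).symm'.trans' hR⟩
  | val v =>
    cases hstep with
    | @lamApp b _ hv =>
      have hev : EvalsToValue (clo 0 (lam b)) :=
        ⟨_, ⟨_, rfl⟩, Relation.ReflTransGen.refl, fun u hu => by cases red_iff.1 hu⟩
      obtain ⟨w, ⟨c, rfl⟩, hw1, hw2⟩ := (hR .hole trivial).1.1 hev
      obtain ⟨t1', h1, h2⟩ := reflect hw1 hw2 t1 rfl
      have hb : IsValue t1' := by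
        rcases progress t1' with h | ⟨t', h⟩ | h | h
        · exact h
        · have := step_clo h; rw [h2] at this; cases this
        · obtain ⟨t', h⟩ := h .hole
          have := step_clo h; rw [h2] at this; cases this
        · rw [h2] at h; cases h
      obtain ⟨b1, rfl⟩ := hb
      refine ⟨substT 0 v b1, ⟨_, h1, Step.lamApp hv⟩, ?_⟩
      have e0 := equiv_step (step_clo (Step.beta (t := b) hv))
      have e1 := equiv_step (step_clo (Step.beta (t := b1) hv))
      have e2 := equiv_app (closed_clo v 0) (hR.trans' (equiv_taustar h1))
      exact e0.symm'.trans' (e2.trans' e1)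
  | ctx E =>
    have hst : EvalsToStuck (clo 0 t0) := by
      have hn : ∀ u, ¬ Red (clo 0 t0) u := by
        intro u hu
        have := (step_det hc (red_iff.1 hu)).1
        simp [cloL, Label.kind] at this
      refine ⟨clo 0 t0, ⟨?_, hn⟩, Relation.ReflTransGen.refl, hn⟩
      rintro ⟨b, hb⟩
      rw [hb] at hc
      cases hc
    obtain ⟨w, ⟨hnv, _⟩, hw1, hw2⟩ := (hR .hole trivial).2.1 hst
    obtain ⟨t1', h1, h2⟩ := reflect hw1 hw2 t1 rfl
    rcases progress t1' with h | ⟨t', h⟩ | h | h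
    · exact absurd (h2 ▸ clo_value h 0) hnv
    · exact absurd (red_iff.2 (h2 ▸ step_clo h)) (hw2 _)
    · obtain ⟨t1'', h⟩ := h E
      refine ⟨t1'', ⟨_, h1, h⟩, ?_⟩
      have e0 := equiv_step (step_reset_plug hc)
      have e1 := equiv_step (step_reset_plug (step_clo h))
      have e2 := equiv_reset (equiv_plug E (hR.trans' (equiv_taustar h1)))
      exact e0.symm'.trans' (e2.trans' e1)
    · rw [h2] at h
      exact absurd (red_iff.2 h) (hw2 _)

end LamS

open LamS LamS.Tm in
/-- completeness of applicative bisimilarity w.r.t.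
    evaluation-context-based contextual equivalence. -/
theorem bisim_complete :
    ∀ t0 t1 : Tm, Closed t0 → Closed t1 → ECtxEquiv t0 t1 → Bisim t0 t1 := by
  intro t0 t1 h0 h1 h
  refine ⟨fun t0 t1 => ECtxEquiv (clo 0 t0) (clo 0 t1), ⟨sim_aux, ?_⟩, ?_⟩
  · intro a b hab l a' hs
    obtain ⟨b', hb, hR⟩ := sim_aux (ECtxEquiv.symm' hab) hs
    exact ⟨b', hb, ECtxEquiv.symm' hR⟩
  · show ECtxEquiv (clo 0 t0) (clo 0 t1)
    rw [clo_of_closed t0 0 h0, clo_of_closed t1 0 h1]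
    exact h
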